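/- Let α = 0, f = z². As graded vector spaces, Ext¹_A(X, Y), Ext¹_A(Y, X), Ext¹_A(X, X), and Ext¹_A(Y, Y) are each one-dimensional, concentrated in degree 0, where X = A/(x,z)A and Y = (A/(y,z−1)A)⟨1⟩. -/

import Mathlib

open Polynomial

noncomputable section

/-- The defining relations of the generalized Weyl algebra `A(f)` over `k[z]` with
`σ(z) = z + 1`: `xz = σ(z)x`, `yz = σ⁻¹(z)y`, `xy = f`, `yx = σ⁻¹(f)`.
Generators: `0 ↦ x`, `1 ↦ y`, `2 ↦ z`. -/
inductive gwaRel (k : Type) [Field k] (f : Polynomial k) :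
    FreeAlgebra k (Fin 3) → FreeAlgebra k (Fin 3) → Prop
  | xz : gwaRel k f (FreeAlgebra.ι k 0 * FreeAlgebra.ι k 2)
      ((FreeAlgebra.ι k 2 + 1) * FreeAlgebra.ι k 0)
  | yz : gwaRel k f (FreeAlgebra.ι k 1 * FreeAlgebra.ι k 2)
      ((FreeAlgebra.ι k 2 - 1) * FreeAlgebra.ι k 1)
  | xy : gwaRel k f (FreeAlgebra.ι k 0 * FreeAlgebra.ι k 1)
      (aeval (FreeAlgebra.ι k 2) f)
  | yx : gwaRel k f (FreeAlgebra.ι k 1 * FreeAlgebra.ι k 0)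
      (aeval (FreeAlgebra.ι k 2) (f.comp (X - 1)))

/-- The generalized Weyl algebra `A(f) = k[z]⟨x,y⟩ / (xz-σ(z)x, yz-σ⁻¹(z)y, xy-f, yx-σ⁻¹(f))`. -/
abbrev GWA (k : Type) [Field k] (f : Polynomial k) := RingQuot (gwaRel k f)

def gwaX (k : Type) [Field k] (f : Polynomial k) : GWA k f :=
  RingQuot.mkAlgHom k (gwaRel k f) (FreeAlgebra.ι k 0)

def gwaY (k : Type) [Field k] (f : Polynomial k) : GWA k f :=
  RingQuot.mkAlgHom k (gwaRel k f) (FreeAlgebra.ι k 1)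

def gwaZ (k : Type) [Field k] (f : Polynomial k) : GWA k f :=
  RingQuot.mkAlgHom k (gwaRel k f) (FreeAlgebra.ι k 2)

/-- The canonical `k[z]`-module generator of the degree-`n` component of `A(f)`:
`xⁿ` for `n ≥ 0` and `y⁻ⁿ` for `n < 0`. -/
def gwaMon (k : Type) [Field k] (f : Polynomial k) (n : ℤ) : GWA k f :=
  if 0 ≤ n then gwaX k f ^ n.toNat else gwaY k f ^ (-n).toNat

/-- The degree-`n` component of `A(f)` (as a `k`-subspace): the left `k[z]`-span of the
canonical monomial `mₙ`. -/
def gwaComp (k : Type) [Field k] (f : Polynomial k) (n : ℤ) : Submodule k (GWA k f) :=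
  Submodule.span k {w | ∃ q : Polynomial k, w = aeval (gwaZ k f) q * gwaMon k f n}

variable (k : Type) [Field k] (f : Polynomial k)

/-- The degree-`n` component of the shifted graded quotient module `(A(f)/I)⟨s⟩`:
the image of `A(f)_{n−s}` under the quotient map. -/
def qgrade (I : Submodule (GWA k f)ᵐᵒᵖ (GWA k f)) (s n : ℤ) :
    Set (GWA k f ⧸ I) :=
  Submodule.Quotient.mk '' ((gwaComp k f (n - s) : Set (GWA k f)))

/-- `gE` is a `ℤ`-grading of the right `A(f)`-module `E`: the components are additive
subgroups, every element decomposes as a finite sum of homogeneous components, such a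
decomposition is unique, and `E_n · A_i ⊆ E_{n+i}`. -/
def IsGrading (E : ModuleCat.{0} (GWA k f)ᵐᵒᵖ) (gE : ℤ → Set E) : Prop :=
  (∀ n, (0 : E) ∈ gE n) ∧
  (∀ n, ∀ a ∈ gE n, ∀ b ∈ gE n, a + b ∈ gE n) ∧
  (∀ n, ∀ a ∈ gE n, -a ∈ gE n) ∧
  (∀ e : E, ∃ (s : Finset ℤ) (cc : ℤ → E), (∀ n, cc n ∈ gE n) ∧ e = ∑ n ∈ s, cc n) ∧
  (∀ (s : Finset ℤ) (cc : ℤ → E), (∀ n ∈ s, cc n ∈ gE n) →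
    ∑ n ∈ s, cc n = 0 → ∀ n ∈ s, cc n = 0) ∧
  (∀ n i : ℤ, ∀ e ∈ gE n, ∀ a ∈ gwaComp k f i, (MulOpposite.op a) • e ∈ gE (n + i))

/-- `(E, gE, ι, π)` is a graded extension `0 → (A/I_T)⟨t+d⟩ → E → (A/I_S)⟨s⟩ → 0` in the
category of graded right `A(f)`-modules (all maps of degree zero): here `I_T, t` define
the graded module `T = (A/I_T)⟨t⟩`, `I_S, s` define `S = (A/I_S)⟨s⟩`, and `d` is the
degree of the shift applied to `T`. -/
def IsGradedExt (IT : Submodule (GWA k f)ᵐᵒᵖ (GWA k f)) (t : ℤ)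
    (IS : Submodule (GWA k f)ᵐᵒᵖ (GWA k f)) (s : ℤ) (d : ℤ)
    (E : ModuleCat.{0} (GWA k f)ᵐᵒᵖ) (gE : ℤ → Set E)
    (ι : (GWA k f ⧸ IT) →ₗ[(GWA k f)ᵐᵒᵖ] E)
    (π : E →ₗ[(GWA k f)ᵐᵒᵖ] (GWA k f ⧸ IS)) : Prop :=
  IsGrading k f E gE ∧ Function.Injective ι ∧ Function.Surjective π ∧
  LinearMap.range ι = LinearMap.ker π ∧
  (∀ n, ι '' qgrade k f IT t (n - d) ⊆ gE n) ∧
  (∀ n, π '' gE n ⊆ qgrade k f IS s n)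

/-- The graded extension splits (by a degree-zero section). -/
def GradedSplits (IS : Submodule (GWA k f)ᵐᵒᵖ (GWA k f)) (s : ℤ)
    (E : ModuleCat.{0} (GWA k f)ᵐᵒᵖ) (gE : ℤ → Set E)
    (π : E →ₗ[(GWA k f)ᵐᵒᵖ] (GWA k f ⧸ IS)) : Prop :=
  ∃ sec : (GWA k f ⧸ IS) →ₗ[(GWA k f)ᵐᵒᵖ] E,
    π.comp sec = LinearMap.id ∧ ∀ n, sec '' qgrade k f IS s n ⊆ gE n

/-- `Ext¹_A(S, T) = 0` (as a graded vector space): every graded extension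
`0 → T⟨d⟩ → E → S → 0` splits, for every degree `d`. -/
def ExtVanishes (IT : Submodule (GWA k f)ᵐᵒᵖ (GWA k f)) (t : ℤ)
    (IS : Submodule (GWA k f)ᵐᵒᵖ (GWA k f)) (s : ℤ) : Prop :=
  ∀ (d : ℤ) (E : ModuleCat.{0} (GWA k f)ᵐᵒᵖ) (gE : ℤ → Set E)
    (ι : (GWA k f ⧸ IT) →ₗ[(GWA k f)ᵐᵒᵖ] E)
    (π : E →ₗ[(GWA k f)ᵐᵒᵖ] (GWA k f ⧸ IS)),
    IsGradedExt k f IT t IS s d E gE ι π → GradedSplits k f IS s E gE π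

/-- `Ext¹_A(S, T) = k`, concentrated in degree `0` (as a graded vector space):
every graded extension `0 → T⟨d⟩ → E → S → 0` with `d ≠ 0` splits; there is a nonsplit
graded extension in degree `0`; and any two nonsplit graded extensions in degree `0`
are equivalent up to a nonzero scalar `c ∈ k^×` (there is a degree-zero homomorphism of
extensions which is `c·id` on `T`; such extensions represent proportional classes, so
the degree-`0` component of `Ext¹` is one-dimensional). -/
def ExtOneDim (IT : Submodule (GWA k f)ᵐᵒᵖ (GWA k f)) (t : ℤ)
    (IS : Submodule (GWA k f)ᵐᵒᵖ (GWA k f)) (s : ℤ) : Prop :=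
  (∀ (d : ℤ), d ≠ 0 → ∀ (E : ModuleCat.{0} (GWA k f)ᵐᵒᵖ) (gE : ℤ → Set E)
    (ι : (GWA k f ⧸ IT) →ₗ[(GWA k f)ᵐᵒᵖ] E)
    (π : E →ₗ[(GWA k f)ᵐᵒᵖ] (GWA k f ⧸ IS)),
    IsGradedExt k f IT t IS s d E gE ι π → GradedSplits k f IS s E gE π) ∧
  (∃ (E : ModuleCat.{0} (GWA k f)ᵐᵒᵖ) (gE : ℤ → Set E)
    (ι : (GWA k f ⧸ IT) →ₗ[(GWA k f)ᵐᵒᵖ] E)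
    (π : E →ₗ[(GWA k f)ᵐᵒᵖ] (GWA k f ⧸ IS)),
    IsGradedExt k f IT t IS s 0 E gE ι π ∧ ¬GradedSplits k f IS s E gE π) ∧
  (∀ (E : ModuleCat.{0} (GWA k f)ᵐᵒᵖ) (gE : ℤ → Set E)
    (ι : (GWA k f ⧸ IT) →ₗ[(GWA k f)ᵐᵒᵖ] E)
    (π : E →ₗ[(GWA k f)ᵐᵒᵖ] (GWA k f ⧸ IS)),
    IsGradedExt k f IT t IS s 0 E gE ι π → ¬GradedSplits k f IS s E gE π →
    ∀ (E' : ModuleCat.{0} (GWA k f)ᵐᵒᵖ) (gE' : ℤ → Set E')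
      (ι' : (GWA k f ⧸ IT) →ₗ[(GWA k f)ᵐᵒᵖ] E')
      (π' : E' →ₗ[(GWA k f)ᵐᵒᵖ] (GWA k f ⧸ IS)),
      IsGradedExt k f IT t IS s 0 E' gE' ι' π' → ¬GradedSplits k f IS s E' gE' π' →
      ∃ c : k, c ≠ 0 ∧ ∃ ψ : E →ₗ[(GWA k f)ᵐᵒᵖ] E',
        (∀ w : GWA k f ⧸ IT,
          ψ (ι w) = ι' ((MulOpposite.op (algebraMap k (GWA k f) c)) • w)) ∧
        (∀ e : E, π' (ψ e) = π e) ∧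
        (∀ n, ψ '' gE n ⊆ gE' n))

/-!
Present `S = A/(h, h')A` by homogeneous generators and let `T` be simple.  In degree `n` the element
`z` acts on `S` as `n` and on `T⟨d⟩` as `n - d`, so every graded extension with `d ≠ 0` splits.  For
`d = 0` lift the generator of `S` to a homogeneous `e`.  In all four cases `h` and `h'` can be
chosen so that `e · h'` lies in a degree where `T` vanishes and `e · h` in the one-dimensional
degree of the generator of `T`.  Hence an extension is determined by the scalar `e · h`, and the
only candidate for a nonsplit one is `A/J` with `J = h'A + hI_T`.  It is nonsplit as soon as
`h ∉ J`, which is detected by a representation of `A` on `k[X]`: for `Ext¹(X, Y)` and `Ext¹(Y, X)`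
this needs only that `0` is a root of `f`, for `Ext¹(X, X)` and `Ext¹(Y, Y)` that it is a multiple
root.
-/

theorem semiconjBy_aeval {R A : Type*} [CommSemiring R] [Semiring A] [Algebra R A] {w z z' : A}
    (h : SemiconjBy w z z') (q : R[X]) : SemiconjBy w (aeval z q) (aeval z' q) := by
  induction q using Polynomial.induction_on' with
  | add p q hp hq => simpa only [map_add] using hp.add_right hq
  | monomial n a =>
    simpa only [aeval_monomial] using
      ((Algebra.commute_algebraMap_left a w).symm.semiconjBy).mul_right (h.pow_right n)

section Structure

variable {k f}

theorem gwaX_mul_gwaZ : gwaX k f * gwaZ k f = (gwaZ k f + 1) * gwaX k f := by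
  have := RingQuot.mkAlgHom_rel k (gwaRel.xz (k := k) (f := f))
  simpa [gwaX, gwaZ] using this

theorem gwaY_mul_gwaZ : gwaY k f * gwaZ k f = (gwaZ k f - 1) * gwaY k f := by
  have := RingQuot.mkAlgHom_rel k (gwaRel.yz (k := k) (f := f))
  simpa [gwaY, gwaZ] using this

theorem gwaX_mul_gwaY : gwaX k f * gwaY k f = aeval (gwaZ k f) f := by
  have := RingQuot.mkAlgHom_rel k (gwaRel.xy (k := k) (f := f))
  simpa [gwaX, gwaY, gwaZ, aeval_algHom_apply] using this

theorem gwaY_mul_gwaX : gwaY k f * gwaX k f = aeval (gwaZ k f) (f.comp (X - 1)) := by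
  have := RingQuot.mkAlgHom_rel k (gwaRel.yx (k := k) (f := f))
  rw [map_mul, ← aeval_algHom_apply] at this
  exact this

theorem adjoin_gwaX_gwaY_gwaZ : Algebra.adjoin k {gwaX k f, gwaY k f, gwaZ k f} = ⊤ := by
  have hrange : RingQuot.mkAlgHom k (gwaRel k f) '' Set.range (FreeAlgebra.ι k) =
      {gwaX k f, gwaY k f, gwaZ k f} := by
    ext w
    simp [Fin.exists_fin_succ, eq_comm (a := w), gwaX, gwaY, gwaZ]
  rw [← hrange, ← AlgHom.map_adjoin, FreeAlgebra.adjoin_range_ι, Algebra.map_top,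
    AlgHom.range_eq_top]
  exact RingQuot.mkAlgHom_surjective k _

theorem gwaMon_natCast (j : ℕ) : gwaMon k f j = gwaX k f ^ j := by
  simp [gwaMon]

theorem gwaMon_neg_natCast (j : ℕ) : gwaMon k f (-j) = gwaY k f ^ j := by
  rcases Nat.eq_zero_or_pos j with rfl | hj
  · simp [gwaMon]
  · have : ¬ (0 : ℤ) ≤ -j := by omega
    simp only [gwaMon, if_neg this, neg_neg, Int.toNat_natCast]

theorem semiconjBy_gwaX_pow (j : ℕ) :
    SemiconjBy (gwaX k f ^ j) (gwaZ k f) (gwaZ k f + j) := by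
  induction j with
  | zero => simp
  | succ j ih =>
    have h : SemiconjBy (gwaX k f) (gwaZ k f + j) (gwaZ k f + 1 + j) :=
      SemiconjBy.add_right gwaX_mul_gwaZ (Nat.cast_commute j _).symm
    simpa only [pow_succ', Nat.cast_succ, add_assoc, add_comm (1 : GWA k f)] using h.mul_left ih

theorem semiconjBy_gwaY_pow (j : ℕ) :
    SemiconjBy (gwaY k f ^ j) (gwaZ k f) (gwaZ k f - j) := by
  induction j with
  | zero => simp
  | succ j ih =>
    have h : SemiconjBy (gwaY k f) (gwaZ k f - j) (gwaZ k f - 1 - j) :=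
      SemiconjBy.sub_right gwaY_mul_gwaZ (Nat.cast_commute j _).symm
    simpa only [pow_succ', Nat.cast_succ, sub_sub, add_comm (1 : GWA k f)] using h.mul_left ih

theorem semiconjBy_gwaMon (n : ℤ) : SemiconjBy (gwaMon k f n) (gwaZ k f) (gwaZ k f + n) := by
  obtain ⟨j, rfl | rfl⟩ := n.eq_nat_or_neg
  · simpa [gwaMon_natCast] using semiconjBy_gwaX_pow j
  · simpa [gwaMon_neg_natCast, sub_eq_add_neg] using semiconjBy_gwaY_pow j

theorem mem_gwaComp {n : ℤ} {w : GWA k f} :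
    w ∈ gwaComp k f n ↔ ∃ q : k[X], w = aeval (gwaZ k f) q * gwaMon k f n := by
  refine ⟨fun h => ?_, fun h => Submodule.subset_span h⟩
  induction h using Submodule.span_induction with
  | mem _ h => exact h
  | zero => exact ⟨0, by simp⟩
  | add u v _ _ hu hv =>
    obtain ⟨p, rfl⟩ := hu
    obtain ⟨q, rfl⟩ := hv
    exact ⟨p + q, by simp [add_mul]⟩
  | smul c u _ hu =>
    obtain ⟨p, rfl⟩ := hu
    exact ⟨c • p, by simp⟩

theorem mem_gwaComp_zero {w : GWA k f} :
    w ∈ gwaComp k f 0 ↔ ∃ q : k[X], w = aeval (gwaZ k f) q := by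
  simp [mem_gwaComp, gwaMon]

theorem one_mem_gwaComp : (1 : GWA k f) ∈ gwaComp k f 0 :=
  mem_gwaComp_zero.2 ⟨1, by simp⟩

theorem gwaZ_mem_gwaComp : gwaZ k f ∈ gwaComp k f 0 :=
  mem_gwaComp_zero.2 ⟨X, (aeval_X _).symm⟩

theorem gwaMon_mem_gwaComp (n : ℤ) : gwaMon k f n ∈ gwaComp k f n :=
  mem_gwaComp.2 ⟨1, by simp⟩

theorem gwaX_mem_gwaComp : gwaX k f ∈ gwaComp k f 1 := by
  simpa [gwaMon] using gwaMon_mem_gwaComp (k := k) (f := f) 1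

theorem gwaY_mem_gwaComp : gwaY k f ∈ gwaComp k f (-1) := by
  simpa [gwaMon] using gwaMon_mem_gwaComp (k := k) (f := f) (-1)

theorem semiconjBy_of_mem_gwaComp {n : ℤ} {a : GWA k f} (ha : a ∈ gwaComp k f n) :
    SemiconjBy a (gwaZ k f) (gwaZ k f + n) := by
  obtain ⟨p, rfl⟩ := mem_gwaComp.1 ha
  have hz : Commute (aeval (gwaZ k f) p) (gwaZ k f) := by
    simpa using (Commute.all p X).map (aeval (gwaZ k f))
  exact (SemiconjBy.add_right hz (Int.cast_commute n _).symm).mul_left (semiconjBy_gwaMon n)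

theorem semiconjBy_gwaZ_sub {i j : ℤ} {a : GWA k f} (ha : a ∈ gwaComp k f (j - i)) :
    SemiconjBy a (gwaZ k f - j) (gwaZ k f - i) := by
  simpa [add_sub_assoc, ← sub_eq_add_neg] using
    (semiconjBy_of_mem_gwaComp ha).sub_right (Int.cast_commute j a).symm

theorem mul_aeval_gwaZ {n : ℤ} {a : GWA k f} (ha : a ∈ gwaComp k f n) (q : k[X]) :
    a * aeval (gwaZ k f) q = aeval (gwaZ k f) (q.comp (X + (n : k[X]))) * a := by
  simpa [aeval_comp] using (semiconjBy_aeval (semiconjBy_of_mem_gwaComp ha) q).eq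

theorem aeval_gwaZ_mul {n : ℤ} {a : GWA k f} (ha : a ∈ gwaComp k f n) (q : k[X]) :
    aeval (gwaZ k f) q * a = a * aeval (gwaZ k f) (q.comp (X - (n : k[X]))) := by
  rw [mul_aeval_gwaZ ha, comp_assoc]
  simp

theorem aeval_mul_mem_gwaComp {n : ℤ} {w : GWA k f} (hw : w ∈ gwaComp k f n) (p : k[X]) :
    aeval (gwaZ k f) p * w ∈ gwaComp k f n := by
  obtain ⟨q, rfl⟩ := mem_gwaComp.1 hw
  exact mem_gwaComp.2 ⟨p * q, by rw [map_mul, mul_assoc]⟩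

theorem mul_aeval_mem_gwaComp {n : ℤ} {w : GWA k f} (hw : w ∈ gwaComp k f n) (p : k[X]) :
    w * aeval (gwaZ k f) p ∈ gwaComp k f n := by
  rw [mul_aeval_gwaZ hw]
  exact aeval_mul_mem_gwaComp hw _

theorem mul_gwaX_mem_gwaComp {n : ℤ} {w : GWA k f} (hw : w ∈ gwaComp k f n) :
    w * gwaX k f ∈ gwaComp k f (n + 1) := by
  obtain ⟨p, rfl⟩ := mem_gwaComp.1 hw
  rw [mul_assoc]
  refine aeval_mul_mem_gwaComp ?_ p
  obtain ⟨j, rfl | rfl⟩ := n.eq_nat_or_neg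
  · rw [gwaMon_natCast, ← pow_succ, ← Nat.cast_succ, ← gwaMon_natCast]
    exact gwaMon_mem_gwaComp _
  · cases j with
    | zero => simpa [gwaMon] using gwaX_mem_gwaComp
    | succ j =>
      rw [gwaMon_neg_natCast, pow_succ, mul_assoc, gwaY_mul_gwaX, ← gwaMon_neg_natCast,
        Nat.cast_succ, neg_add, neg_add_cancel_right]
      exact mul_aeval_mem_gwaComp (gwaMon_mem_gwaComp _) _

theorem mul_gwaY_mem_gwaComp {n : ℤ} {w : GWA k f} (hw : w ∈ gwaComp k f n) :
    w * gwaY k f ∈ gwaComp k f (n - 1) := by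
  obtain ⟨p, rfl⟩ := mem_gwaComp.1 hw
  rw [mul_assoc]
  refine aeval_mul_mem_gwaComp ?_ p
  obtain ⟨j, rfl | rfl⟩ := n.eq_nat_or_neg
  · cases j with
    | zero => simpa [gwaMon] using gwaY_mem_gwaComp
    | succ j =>
      rw [gwaMon_natCast, pow_succ, mul_assoc, gwaX_mul_gwaY, ← gwaMon_natCast,
        Nat.cast_succ, add_sub_cancel_right]
      exact mul_aeval_mem_gwaComp (gwaMon_mem_gwaComp _) _
  · rw [gwaMon_neg_natCast, ← pow_succ, sub_eq_add_neg, ← neg_add, ← Nat.cast_succ,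
      ← gwaMon_neg_natCast]
    exact gwaMon_mem_gwaComp _

theorem mul_gwaMon_mem_gwaComp {n : ℤ} {w : GWA k f} (hw : w ∈ gwaComp k f n) (i : ℤ) :
    w * gwaMon k f i ∈ gwaComp k f (n + i) := by
  obtain ⟨j, rfl | rfl⟩ := i.eq_nat_or_neg
  · rw [gwaMon_natCast]
    induction j with
    | zero => simpa using hw
    | succ j ih =>
      rw [pow_succ, ← mul_assoc, Nat.cast_succ, ← add_assoc]
      exact mul_gwaX_mem_gwaComp ih
  · rw [gwaMon_neg_natCast]
    induction j with
    | zero => simpa using hw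
    | succ j ih =>
      rw [pow_succ, ← mul_assoc, Nat.cast_succ, neg_add, ← add_assoc]
      exact mul_gwaY_mem_gwaComp ih

theorem mul_mem_gwaComp {n i : ℤ} {w v : GWA k f} (hw : w ∈ gwaComp k f n)
    (hv : v ∈ gwaComp k f i) : w * v ∈ gwaComp k f (n + i) := by
  obtain ⟨q, rfl⟩ := mem_gwaComp.1 hv
  rw [← mul_assoc]
  exact mul_gwaMon_mem_gwaComp (mul_aeval_mem_gwaComp hw q) i

theorem iSup_gwaComp : ⨆ n, gwaComp k f n = ⊤ := by
  have hmul : (⨆ n, gwaComp k f n) * ⨆ n, gwaComp k f n ≤ ⨆ n, gwaComp k f n := by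
    simp only [Submodule.iSup_mul, Submodule.mul_iSup, iSup_le_iff, Submodule.mul_le]
    exact fun n i a ha b hb => Submodule.mem_iSup_of_mem _ (mul_mem_gwaComp ha hb)
  let A := (⨆ n, gwaComp k f n).toSubalgebra (Submodule.mem_iSup_of_mem 0 one_mem_gwaComp)
    fun a b ha hb => hmul (Submodule.mul_mem_mul ha hb)
  have hA : A = ⊤ := by
    rw [eq_top_iff, ← adjoin_gwaX_gwaY_gwaZ, Algebra.adjoin_le_iff]
    rintro _ (rfl | rfl | rfl)
    · exact Submodule.mem_iSup_of_mem 1 gwaX_mem_gwaComp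
    · exact Submodule.mem_iSup_of_mem (-1) gwaY_mem_gwaComp
    · exact Submodule.mem_iSup_of_mem 0 gwaZ_mem_gwaComp
  exact (Submodule.toSubalgebra_toSubmodule _ _ _).symm.trans
    ((congrArg Subalgebra.toSubmodule hA).trans Algebra.top_toSubmodule)

theorem exists_sum_gwaComp (s : ℤ) (a : GWA k f) :
    ∃ (S : Finset ℤ) (cc : ℤ → GWA k f), (∀ n, cc n ∈ gwaComp k f (n - s)) ∧
      a = ∑ n ∈ S, cc n := by
  have ha : a ∈ ⨆ n, gwaComp k f (n - s) := by
    have h : ⨆ n, gwaComp k f (n - s) = ⨆ n, gwaComp k f n :=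
      (Equiv.subRight s).iSup_comp (g := gwaComp k f)
    rw [h, iSup_gwaComp]
    exact Submodule.mem_top
  obtain ⟨φ, hφ, rfl⟩ := (Submodule.mem_iSup_iff_exists_finsupp _ _).1 ha
  exact ⟨φ.support, φ, hφ, rfl⟩

end Structure

section RightModule

theorem exists_comp_eq_of_ker_le {R M N P : Type*} [Ring R] [AddCommGroup M] [AddCommGroup N]
    [AddCommGroup P] [Module R M] [Module R N] [Module R P] {φ : M →ₗ[R] N}
    (hφ : Function.Surjective φ) {χ : M →ₗ[R] P} (h : LinearMap.ker φ ≤ LinearMap.ker χ) :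
    ∃ ψ : N →ₗ[R] P, ψ ∘ₗ φ = χ := by
  refine ⟨(LinearMap.ker φ).liftQ χ h ∘ₗ (φ.quotKerEquivOfSurjective hφ).symm,
    LinearMap.ext fun m => ?_⟩
  have hm : (φ.quotKerEquivOfSurjective hφ).symm (φ m) = Submodule.Quotient.mk m :=
    (LinearEquiv.symm_apply_eq _).2 rfl
  exact congrArg _ hm

variable {R : Type*} [Ring R] {E : Type*} [AddCommGroup E] [Module Rᵐᵒᵖ E]

/-- The homomorphism of right `R`-modules `R → E`, `a ↦ e · a`.  For `E = R` it is left
multiplication by `e`. -/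
def orbitMap (e : E) : R →ₗ[Rᵐᵒᵖ] E where
  toFun a := MulOpposite.op a • e
  map_add' a b := by rw [MulOpposite.op_add, add_smul]
  map_smul' r a := by
    rw [RingHom.id_apply, ← mul_smul]
    rfl

theorem orbitMap_apply (e : E) (a : R) : orbitMap e a = MulOpposite.op a • e := rfl

theorem orbitMap_mul (e : E) (a b : R) : orbitMap e (a * b) = MulOpposite.op b • orbitMap e a := by
  rw [orbitMap_apply, orbitMap_apply, MulOpposite.op_mul, mul_smul]

theorem map_orbitMap {F : Type*} [AddCommGroup F] [Module Rᵐᵒᵖ F] (φ : E →ₗ[Rᵐᵒᵖ] F) (e : E)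
    (a : R) : φ (orbitMap e a) = orbitMap (φ e) a :=
  map_smul φ _ e

theorem orbitMap_mk_one (I : Submodule Rᵐᵒᵖ R) (a : R) :
    orbitMap (Submodule.Quotient.mk 1 : R ⧸ I) a = Submodule.Quotient.mk a :=
  congrArg Submodule.Quotient.mk (one_mul a)

theorem mul_mem_rightIdeal {I : Submodule Rᵐᵒᵖ R} {a : R} (ha : a ∈ I) (b : R) : a * b ∈ I :=
  I.smul_mem (MulOpposite.op b) ha

end RightModule

section Gradings

variable {k f} {I : Submodule (GWA k f)ᵐᵒᵖ (GWA k f)} {s : ℤ}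

theorem aeval_gwaZ_sub_eval_mem (hI : gwaZ k f - s ∈ I) (p : k[X]) :
    aeval (gwaZ k f) p - algebraMap k (GWA k f) (p.eval (s : k)) ∈ I := by
  obtain ⟨q, hq⟩ := X_sub_C_dvd_sub_C_eval (a := (s : k)) (p := p)
  have h : aeval (gwaZ k f) p - algebraMap k (GWA k f) (p.eval (s : k)) =
      (gwaZ k f - s) * aeval (gwaZ k f) q := by
    simpa using congrArg (aeval (gwaZ k f)) hq
  rw [h]
  exact mul_mem_rightIdeal hI _

theorem aeval_gwaZ_mem (hI : gwaZ k f - s ∈ I) {p : k[X]} (hp : p.eval (s : k) = 0) :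
    aeval (gwaZ k f) p ∈ I := by
  simpa only [hp, map_zero, sub_zero] using aeval_gwaZ_sub_eval_mem hI p

/-- On `A/I` right multiplication by `z` has generalized eigenvalue `n` on the image of
`A_{n-s}`, so the images of the homogeneous components are independent. -/
theorem mem_of_sum_gwaComp_mem [CharZero k] {m : ℕ} (hI : (gwaZ k f - s) ^ m ∈ I) {S : Finset ℤ}
    {cc : ℤ → GWA k f} (hcc : ∀ n ∈ S, cc n ∈ gwaComp k f (n - s)) (hsum : ∑ n ∈ S, cc n ∈ I) :
    ∀ n ∈ S, cc n ∈ I := by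
  let Z : Module.End k (GWA k f ⧸ I) := Algebra.lsmul k k _ (MulOpposite.op (gwaZ k f))
  have hZ (n : ℤ) (j : ℕ) (a : GWA k f) :
      ((Z - (n : k) • 1) ^ j) (I.mkQ a) = I.mkQ (a * (gwaZ k f - n) ^ j) := by
    induction j generalizing a with
    | zero => simp
    | succ j ih =>
      have h : (Z - (n : k) • 1) (I.mkQ a) = I.mkQ (a * (gwaZ k f - n)) := by
        change I.mkQ (a * gwaZ k f) - (n : k) • I.mkQ a = _
        rw [mul_sub, map_sub, Int.cast_smul_eq_zsmul, ← map_zsmul, zsmul_eq_mul,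
          (Int.cast_commute n a).eq]
      rw [pow_succ, Module.End.mul_apply, h, ih, mul_assoc, ← pow_succ']
  have hind : iSupIndep fun n : ℤ => Z.genEigenspace (n : k) m :=
    (Z.independent_genEigenspace m).comp Int.cast_injective
  have hmem (n : ℤ) (hn : n ∈ S) : I.mkQ (cc n) ∈ Z.genEigenspace (n : k) m := by
    rw [Module.End.mem_genEigenspace_nat, LinearMap.mem_ker, hZ,
      ((semiconjBy_gwaZ_sub (hcc n hn)).pow_right m).eq]
    exact (Submodule.Quotient.mk_eq_zero I).2 (mul_mem_rightIdeal hI _)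
  have hzero : ∑ n ∈ S, I.mkQ (cc n) = 0 := by
    rw [← map_sum]
    exact (Submodule.Quotient.mk_eq_zero I).2 hsum
  exact fun n hn => (Submodule.Quotient.mk_eq_zero I).1
    ((iSupIndep_iff_finsetSum_eq_zero_imp_eq_zero _).1 hind S _ hmem hzero n hn)

theorem isGrading_qgrade [CharZero k] {m : ℕ} (hI : (gwaZ k f - s) ^ m ∈ I) :
    IsGrading k f (ModuleCat.of _ (GWA k f ⧸ I)) (qgrade k f I s) := by
  refine ⟨fun n => ⟨0, zero_mem _, rfl⟩, ?_, ?_, fun e => ?_, fun S cc hcc h0 => ?_, ?_⟩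
  · rintro n _ ⟨a, ha, rfl⟩ _ ⟨b, hb, rfl⟩
    exact ⟨a + b, add_mem ha hb, rfl⟩
  · rintro n _ ⟨a, ha, rfl⟩
    exact ⟨-a, neg_mem ha, rfl⟩
  · obtain ⟨a, rfl⟩ := I.mkQ_surjective e
    obtain ⟨S, cc, hcc, rfl⟩ := exists_sum_gwaComp s a
    exact ⟨S, fun n => I.mkQ (cc n), fun n => ⟨cc n, hcc n, rfl⟩, map_sum _ _ _⟩
  · choose! b hb hbcc using hcc
    have hsum : ∑ n ∈ S, b n ∈ I := by
      rw [← Submodule.Quotient.mk_eq_zero, ← h0, ← Finset.sum_congr rfl hbcc]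
      exact map_sum I.mkQ b S
    intro n hn
    rw [← hbcc n hn, Submodule.Quotient.mk_eq_zero]
    exact mem_of_sum_gwaComp_mem hI hb hsum n hn
  · rintro n i _ ⟨a, ha, rfl⟩ b hb
    refine ⟨a * b, ?_, rfl⟩
    rw [add_sub_right_comm]
    exact mul_mem_gwaComp ha hb

theorem isCoatom_of_exists_mul_sub_one_mem [CharZero k] (hI : gwaZ k f - s ∈ I) (hI_ne : I ≠ ⊤)
    (hinv : ∀ n, ∀ a ∈ gwaComp k f n, a ∉ I → ∃ b, a * b - 1 ∈ I) : IsCoatom I := by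
  refine ⟨hI_ne, fun J hIJ => ?_⟩
  obtain ⟨c, hcJ, hcI⟩ := SetLike.exists_of_lt hIJ
  obtain ⟨S, cc, hcc, rfl⟩ := exists_sum_gwaComp s c
  have hccJ : ∀ n ∈ S, cc n ∈ J :=
    mem_of_sum_gwaComp_mem (m := 1) (by simpa using hIJ.le hI) (fun n _ => hcc n) hcJ
  obtain ⟨n, hn, hnI⟩ : ∃ n ∈ S, cc n ∉ I := by
    by_contra! h
    exact hcI (sum_mem h)
  obtain ⟨b, hb⟩ := hinv _ _ (hcc n) hnI
  have h1 : (1 : GWA k f) ∈ J := by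
    simpa using sub_mem (mul_mem_rightIdeal (hccJ n hn) b) (hIJ.le hb)
  exact eq_top_iff.2 fun a _ => by simpa using mul_mem_rightIdeal h1 a

end Gradings

section IsGrading

variable {k f} {E : ModuleCat.{0} (GWA k f)ᵐᵒᵖ} {gE : ℤ → Set E}

theorem IsGrading.zero_mem (hE : IsGrading k f E gE) (n : ℤ) : 0 ∈ gE n :=
  hE.1 n

theorem IsGrading.add_mem (hE : IsGrading k f E gE) {n : ℤ} {x y : E} (hx : x ∈ gE n)
    (hy : y ∈ gE n) : x + y ∈ gE n :=
  hE.2.1 n x hx y hy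

theorem IsGrading.neg_mem (hE : IsGrading k f E gE) {n : ℤ} {x : E} (hx : x ∈ gE n) :
    -x ∈ gE n :=
  hE.2.2.1 n x hx

theorem IsGrading.exists_sum (hE : IsGrading k f E gE) (x : E) :
    ∃ (S : Finset ℤ) (cc : ℤ → E), (∀ n, cc n ∈ gE n) ∧ x = ∑ n ∈ S, cc n :=
  hE.2.2.2.1 x

theorem IsGrading.eq_zero_of_sum_eq_zero (hE : IsGrading k f E gE) {S : Finset ℤ} {cc : ℤ → E}
    (hcc : ∀ n ∈ S, cc n ∈ gE n) (h : ∑ n ∈ S, cc n = 0) : ∀ n ∈ S, cc n = 0 :=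
  hE.2.2.2.2.1 S cc hcc h

theorem IsGrading.orbitMap_mem (hE : IsGrading k f E gE) {n i m : ℤ} {e : E} (he : e ∈ gE n)
    {a : GWA k f} (ha : a ∈ gwaComp k f i) (hm : n + i = m) : orbitMap e a ∈ gE m :=
  hm ▸ hE.2.2.2.2.2 n i e he a ha

theorem IsGrading.exists_map_eq (hE : IsGrading k f E gE) {M : Type*} [AddCommGroup M]
    {gM : ℤ → Set M} (hM0 : ∀ n, 0 ∈ gM n)
    (hM : ∀ m, ∃ (S : Finset ℤ) (cc : ℤ → M), (∀ n, cc n ∈ gM n) ∧ m = ∑ n ∈ S, cc n)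
    (φ : M →+ E) (hφ : ∀ n, ∀ m ∈ gM n, φ m ∈ gE n) {n : ℤ} {m : M} (hm : φ m ∈ gE n) :
    ∃ m' ∈ gM n, φ m' = φ m := by
  obtain ⟨S, cc, hcc, rfl⟩ := hM m
  set x := φ (∑ j ∈ S, cc j) with hx
  let cc' (j : ℤ) : M := if j ∈ S then cc j else 0
  have hcc' (j : ℤ) : cc' j ∈ gM j := by
    by_cases hj : j ∈ S
    · simpa only [cc', if_pos hj] using hcc j
    · simpa only [cc', if_neg hj] using hM0 j
  have hmem (j : ℤ) : φ (cc' j) + (if j = n then -x else 0) ∈ gE j := by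
    refine hE.add_mem (hφ j _ (hcc' j)) ?_
    split_ifs with hj
    exacts [hj ▸ hE.neg_mem hm, hE.zero_mem j]
  have hsum : ∑ j ∈ insert n S, (φ (cc' j) + if j = n then -x else 0) = 0 := by
    rw [Finset.sum_add_distrib, ← map_sum, Finset.sum_ite_mem,
      Finset.inter_eq_right.2 (Finset.subset_insert n S), Finset.sum_ite_eq',
      if_pos (Finset.mem_insert_self n S), ← hx, add_neg_cancel]
  have hn := hE.eq_zero_of_sum_eq_zero (fun j _ => hmem j) hsum n (Finset.mem_insert_self n S)
  rw [if_pos rfl, add_neg_eq_zero] at hn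
  exact ⟨cc' n, hcc' n, hn⟩

end IsGrading

section IsGradedExt

variable {k f} {IT IS : Submodule (GWA k f)ᵐᵒᵖ (GWA k f)} {t s d : ℤ}
  {E : ModuleCat.{0} (GWA k f)ᵐᵒᵖ} {gE : ℤ → Set E}
  {ι : (GWA k f ⧸ IT) →ₗ[(GWA k f)ᵐᵒᵖ] E} {π : E →ₗ[(GWA k f)ᵐᵒᵖ] (GWA k f ⧸ IS)}

theorem IsGradedExt.isGrading (h : IsGradedExt k f IT t IS s d E gE ι π) : IsGrading k f E gE :=
  h.1

theorem IsGradedExt.injective (h : IsGradedExt k f IT t IS s d E gE ι π) :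
    Function.Injective ι :=
  h.2.1

theorem IsGradedExt.surjective (h : IsGradedExt k f IT t IS s d E gE ι π) :
    Function.Surjective π :=
  h.2.2.1

theorem IsGradedExt.exists_map_eq_iff (h : IsGradedExt k f IT t IS s d E gE ι π) (x : E) :
    (∃ a, ι (Submodule.Quotient.mk a) = x) ↔ π x = 0 := by
  rw [← LinearMap.mem_ker, ← h.2.2.2.1, LinearMap.mem_range,
    (Submodule.Quotient.mk_surjective IT).exists]

theorem IsGradedExt.map_mk_mem (h : IsGradedExt k f IT t IS s d E gE ι π) {n : ℤ} {a : GWA k f}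
    (ha : a ∈ gwaComp k f (n - d - t)) : ι (Submodule.Quotient.mk a) ∈ gE n :=
  h.2.2.2.2.1 n ⟨_, ⟨a, ha, rfl⟩, rfl⟩

theorem IsGradedExt.map_mem (h : IsGradedExt k f IT t IS s d E gE ι π) {n : ℤ} {x : E}
    (hx : x ∈ gE n) : π x ∈ qgrade k f IS s n :=
  h.2.2.2.2.2 n ⟨x, hx, rfl⟩

theorem IsGradedExt.exists_lift_one [CharZero k] (h : IsGradedExt k f IT t IS s d E gE ι π)
    (hzS : gwaZ k f - s ∈ IS) : ∃ e ∈ gE s, π e = Submodule.Quotient.mk 1 := by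
  obtain ⟨e, he⟩ := h.surjective (Submodule.Quotient.mk 1)
  have h1 : π e ∈ qgrade k f IS s s := by
    rw [he]
    exact ⟨1, by simpa using one_mem_gwaComp, rfl⟩
  obtain ⟨e', he', hπ⟩ := (isGrading_qgrade (m := 1) (by simpa using hzS)).exists_map_eq
    h.isGrading.zero_mem h.isGrading.exists_sum π.toAddMonoidHom (fun _ _ => h.map_mem) h1
  exact ⟨e', he', hπ.trans he⟩

theorem IsGradedExt.exists_mem_gwaComp_map_eq (h : IsGradedExt k f IT t IS s d E gE ι π) {n : ℤ}
    {x : E} (hx : x ∈ gE n) (hπx : π x = 0) :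
    ∃ a ∈ gwaComp k f (n - d - t), ι (Submodule.Quotient.mk a) = x := by
  obtain ⟨a, rfl⟩ := (h.exists_map_eq_iff x).2 hπx
  exact h.isGrading.exists_map_eq (gM := fun n => gwaComp k f (n - d - t))
    (fun _ => Submodule.zero_mem _)
    (fun a => by simpa only [sub_sub, SetLike.mem_coe] using exists_sum_gwaComp (d + t) a)
    (ι ∘ₗ IT.mkQ).toAddMonoidHom (fun _ _ => h.map_mk_mem) hx

theorem IsGradedExt.aeval_smul_eq_zero (h : IsGradedExt k f IT t IS s d E gE ι π)
    (hzT : gwaZ k f - t ∈ IT) {n : ℤ} {x : E} (hx : x ∈ gE n) (hπx : π x = 0) {q : k[X]}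
    (hq : q.eval ((n : k) - d) = 0) : MulOpposite.op (aeval (gwaZ k f) q) • x = 0 := by
  obtain ⟨a, ha, rfl⟩ := h.exists_mem_gwaComp_map_eq hx hπx
  have hmem : a * aeval (gwaZ k f) q ∈ IT := by
    have h0 : (q.comp (X + ((n - d - t : ℤ) : k[X]))).eval (t : k) = 0 := by
      rw [← hq, eval_comp, eval_add, eval_X, eval_intCast]
      push_cast
      ring_nf
    rw [mul_aeval_gwaZ ha]
    exact mul_mem_rightIdeal (aeval_gwaZ_mem hzT h0) a
  rw [← map_smul]
  exact (congrArg ι ((Submodule.Quotient.mk_eq_zero IT).2 hmem)).trans (map_zero ι)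

theorem IsGradedExt.splits (h : IsGradedExt k f IT t IS s d E gE ι π) {e : E} (he : e ∈ gE s)
    (hπe : π e = Submodule.Quotient.mk 1) (hIS : IS ≤ LinearMap.ker (orbitMap e)) :
    GradedSplits k f IS s E gE π := by
  refine ⟨IS.liftQ (orbitMap e) hIS, ?_, ?_⟩
  · refine Submodule.linearMap_qext _ (LinearMap.ext fun a => ?_)
    change π (orbitMap e a) = Submodule.Quotient.mk a
    rw [map_orbitMap, hπe, orbitMap_mk_one]
  · rintro n _ ⟨_, ⟨a, ha, rfl⟩, rfl⟩
    exact h.isGrading.orbitMap_mem he ha (add_sub_cancel s n)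

/-- In each degree `n` the element `z` acts on `S` as `n` and on `T⟨d⟩` as `n - d`, so for
`d ≠ 0` a polynomial in `z` projects a lift of the generator of `S` away from `T⟨d⟩`. -/
theorem IsGradedExt.splits_of_ne_zero [CharZero k] (h : IsGradedExt k f IT t IS s d E gE ι π)
    {G : Set (GWA k f)} (hIS : IS = Submodule.span _ G) (hG : ∀ g ∈ G, ∃ i, g ∈ gwaComp k f i)
    (hzS : gwaZ k f - s ∈ IS) (hzT : gwaZ k f - t ∈ IT) (hd : d ≠ 0) :
    GradedSplits k f IS s E gE π := by
  have hdk : (d : k) ≠ 0 := Int.cast_ne_zero.2 hd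
  obtain ⟨e, he, hπe⟩ := h.exists_lift_one hzS
  let p : k[X] := C (d : k)⁻¹ * (X - C ((s : k) - d))
  have hps : p.eval (s : k) = 1 := by simp [p, hdk]
  have hpsd : p.eval ((s : k) - d) = 0 := by simp [p]
  refine h.splits (e := orbitMap e (aeval (gwaZ k f) p))
    (h.isGrading.orbitMap_mem he (mem_gwaComp_zero.2 ⟨p, rfl⟩) (add_zero s)) ?_ ?_
  · rw [map_orbitMap, hπe, orbitMap_mk_one, Submodule.Quotient.eq]
    simpa [hps] using aeval_gwaZ_sub_eval_mem hzS p
  · rw [hIS, Submodule.span_le]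
    intro g hg
    obtain ⟨i, hi⟩ := hG g hg
    have hπg : π (orbitMap e g) = 0 := by
      rw [map_orbitMap, hπe, orbitMap_mk_one, Submodule.Quotient.mk_eq_zero, hIS]
      exact Submodule.subset_span hg
    change orbitMap (orbitMap e (aeval (gwaZ k f) p)) g = 0
    rw [orbitMap_apply, ← orbitMap_mul, aeval_gwaZ_mul hi, orbitMap_mul]
    exact h.aeval_smul_eq_zero hzT (h.isGrading.orbitMap_mem he hi rfl) hπg
      (by simpa [add_sub_right_comm] using hpsd)

end IsGradedExt

section ExtIdeal

/-- The right ideal `J = h'R + hI` of `R`.  If `I_S = hR + h'R` and `h ∉ J`, then `R/J` is the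
nonsplit extension of `R/I_S` by `R/I`, where `R/I` embeds by left multiplication by `h`. -/
def extIdeal {R : Type*} [Ring R] (h h' : R) (I : Submodule Rᵐᵒᵖ R) : Submodule Rᵐᵒᵖ R :=
  Submodule.span Rᵐᵒᵖ {h'} ⊔ I.map (orbitMap h)

variable {R : Type*} [Ring R] {h h' : R} {I J : Submodule Rᵐᵒᵖ R}

theorem extIdeal_le_iff : extIdeal h h' I ≤ J ↔ h' ∈ J ∧ ∀ b ∈ I, h * b ∈ J := by
  rw [extIdeal, sup_le_iff, Submodule.span_singleton_le_iff_mem, Submodule.map_le_iff_le_comap]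
  rfl

theorem mem_extIdeal : h' ∈ extIdeal h h' I :=
  (extIdeal_le_iff.1 le_rfl).1

theorem mul_mem_extIdeal {b : R} (hb : b ∈ I) : h * b ∈ extIdeal h h' I :=
  (extIdeal_le_iff.1 le_rfl).2 b hb

theorem extIdeal_span_pair_le {u v : R} (h'J : h' ∈ J) (hu : h * u ∈ J) (hv : h * v ∈ J) :
    extIdeal h h' (Submodule.span Rᵐᵒᵖ {u, v}) ≤ J := by
  refine extIdeal_le_iff.2 ⟨h'J, fun b hb => ?_⟩
  have hle : Submodule.span Rᵐᵒᵖ {u, v} ≤ J.comap (orbitMap h) :=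
    Submodule.span_le.2 (Set.pair_subset hu hv)
  exact hle hb

theorem mem_span_pair_iff_exists_mul {a : R} :
    a ∈ Submodule.span Rᵐᵒᵖ {h, h'} ↔ ∃ b b' : R, h * b + h' * b' = a := by
  rw [Submodule.mem_span_pair, MulOpposite.op_surjective.exists]
  exact exists_congr fun _ => MulOpposite.op_surjective.exists

end ExtIdeal

section Generators

variable {k f} {IT IS : Submodule (GWA k f)ᵐᵒᵖ (GWA k f)} {t s : ℤ} {h h' : GWA k f}
  {E : ModuleCat.{0} (GWA k f)ᵐᵒᵖ} {gE : ℤ → Set E}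
  {ι : (GWA k f ⧸ IT) →ₗ[(GWA k f)ᵐᵒᵖ] E} {π : E →ₗ[(GWA k f)ᵐᵒᵖ] (GWA k f ⧸ IS)}

theorem IsGradedExt.exists_generator [CharZero k] {ε : ℤ}
    (hext : IsGradedExt k f IT t IS s 0 E gE ι π) (hns : ¬ GradedSplits k f IS s E gE π)
    (hIS : IS = Submodule.span _ {h, h'}) (hh : h ∈ gwaComp k f (t - s))
    (hh' : h' ∈ gwaComp k f ε) (hzS : gwaZ k f - s ∈ IS) (hzT : gwaZ k f - t ∈ IT)
    (hT : ∀ a ∈ gwaComp k f (s + ε - t), a ∈ IT) :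
    ∃ e ∈ gE s, π e = Submodule.Quotient.mk 1 ∧ orbitMap e h' = 0 ∧
      ∃ c : k, c ≠ 0 ∧ orbitMap e h = ι (Submodule.Quotient.mk (algebraMap k (GWA k f) c)) := by
  obtain ⟨e, he, hπe⟩ := hext.exists_lift_one hzS
  have hπ {a : GWA k f} (ha : a ∈ IS) : π (orbitMap e a) = 0 := by
    rwa [map_orbitMap, hπe, orbitMap_mk_one, Submodule.Quotient.mk_eq_zero]
  have heh' : orbitMap e h' = 0 := by
    obtain ⟨a, ha, hea⟩ := hext.exists_mem_gwaComp_map_eq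
      (hext.isGrading.orbitMap_mem he hh' rfl) (hπ (hIS ▸ Submodule.subset_span (by simp)))
    rw [sub_zero] at ha
    rw [← hea, (Submodule.Quotient.mk_eq_zero IT).2 (hT a ha), map_zero]
  obtain ⟨c, hc⟩ : ∃ c : k, orbitMap e h = ι (Submodule.Quotient.mk (algebraMap k _ c)) := by
    obtain ⟨a, ha, hea⟩ := hext.exists_mem_gwaComp_map_eq
      (hext.isGrading.orbitMap_mem he hh (add_sub_cancel s t))
      (hπ (hIS ▸ Submodule.subset_span (by simp)))
    rw [sub_zero, sub_self] at ha
    obtain ⟨p, rfl⟩ := mem_gwaComp_zero.1 ha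
    exact ⟨p.eval (t : k), by
      rw [← hea, (Submodule.Quotient.eq IT).2 (aeval_gwaZ_sub_eval_mem hzT p)]⟩
  refine ⟨e, he, hπe, heh', c, fun hc0 => hns (hext.splits he hπe ?_), hc⟩
  rw [hc0, map_zero, Submodule.Quotient.mk_zero, map_zero] at hc
  rw [hIS, Submodule.span_le]
  exact Set.pair_subset hc heh'

variable {e : E} {c : k}

theorem orbitMap_mul_eq_map_mk
    (heh : orbitMap e h = ι (Submodule.Quotient.mk (algebraMap k (GWA k f) c))) (b : GWA k f) :
    orbitMap e (h * b) = ι (Submodule.Quotient.mk (c • b)) := by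
  rw [orbitMap_mul, heh, ← map_smul, Algebra.smul_def]
  rfl

theorem IsGradedExt.ker_orbitMap (hext : IsGradedExt k f IT t IS s 0 E gE ι π)
    (hIS : IS = Submodule.span _ {h, h'}) (hπe : π e = Submodule.Quotient.mk 1)
    (heh' : orbitMap e h' = 0) (hc : c ≠ 0)
    (heh : orbitMap e h = ι (Submodule.Quotient.mk (algebraMap k (GWA k f) c))) :
    LinearMap.ker (orbitMap e) = extIdeal h h' IT := by
  have hker (b : GWA k f) : orbitMap e (h * b) = 0 ↔ b ∈ IT := by
    rw [orbitMap_mul_eq_map_mk heh, map_eq_zero_iff ι hext.injective,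
      Submodule.Quotient.mk_eq_zero]
    refine ⟨fun hb => ?_, fun hb => ?_⟩
    · simpa [Algebra.smul_def, Algebra.commutes, mul_assoc, ← map_mul, hc] using
        mul_mem_rightIdeal hb (algebraMap k _ c⁻¹)
    · simpa [Algebra.smul_def, Algebra.commutes] using mul_mem_rightIdeal hb (algebraMap k _ c)
  refine le_antisymm (fun a ha => ?_) (extIdeal_le_iff.2 ⟨heh', fun b hb => (hker b).2 hb⟩)
  have haS : a ∈ IS := by
    rw [← Submodule.Quotient.mk_eq_zero, ← orbitMap_mk_one, ← hπe, ← map_orbitMap,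
      LinearMap.mem_ker.1 ha, map_zero]
  obtain ⟨b, b', rfl⟩ := mem_span_pair_iff_exists_mul.1 (hIS ▸ haS)
  rw [LinearMap.mem_ker, map_add, orbitMap_mul e h', heh', smul_zero, add_zero, hker] at ha
  exact add_mem (mul_mem_extIdeal ha) (mul_mem_rightIdeal mem_extIdeal b')

theorem IsGradedExt.orbitMap_surjective (hext : IsGradedExt k f IT t IS s 0 E gE ι π)
    (hπe : π e = Submodule.Quotient.mk 1) (hc : c ≠ 0)
    (heh : orbitMap e h = ι (Submodule.Quotient.mk (algebraMap k (GWA k f) c))) :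
    Function.Surjective (orbitMap e : GWA k f → E) := by
  intro x
  obtain ⟨a, ha⟩ := Submodule.Quotient.mk_surjective IS (π x)
  obtain ⟨b, hb⟩ := (hext.exists_map_eq_iff (x - orbitMap e a)).2 <| by
    rw [map_sub, map_orbitMap, hπe, orbitMap_mk_one, ha, sub_self]
  refine ⟨a + h * (c⁻¹ • b), ?_⟩
  rw [map_add, orbitMap_mul_eq_map_mk heh, smul_inv_smul₀ hc, hb, add_sub_cancel]

theorem IsGradedExt.exists_hom_of_generators {E' : ModuleCat.{0} (GWA k f)ᵐᵒᵖ}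
    {gE' : ℤ → Set E'} {ι' : (GWA k f ⧸ IT) →ₗ[(GWA k f)ᵐᵒᵖ] E'}
    {π' : E' →ₗ[(GWA k f)ᵐᵒᵖ] (GWA k f ⧸ IS)} {e' : E'} {c' : k}
    (hext : IsGradedExt k f IT t IS s 0 E gE ι π)
    (hext' : IsGradedExt k f IT t IS s 0 E' gE' ι' π') (hIS : IS = Submodule.span _ {h, h'})
    (he : e ∈ gE s) (hπe : π e = Submodule.Quotient.mk 1) (heh' : orbitMap e h' = 0) (hc : c ≠ 0)
    (heh : orbitMap e h = ι (Submodule.Quotient.mk (algebraMap k (GWA k f) c)))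
    (he' : e' ∈ gE' s) (hπe' : π' e' = Submodule.Quotient.mk 1) (heh'' : orbitMap e' h' = 0)
    (hc' : c' ≠ 0)
    (he'h : orbitMap e' h = ι' (Submodule.Quotient.mk (algebraMap k (GWA k f) c'))) :
    ∃ ψ : E →ₗ[(GWA k f)ᵐᵒᵖ] E',
      (∀ w, ψ (ι w) = ι' (MulOpposite.op (algebraMap k (GWA k f) (c' * c⁻¹)) • w)) ∧
      (∀ x, π' (ψ x) = π x) ∧ ∀ n, ψ '' gE n ⊆ gE' n := by
  have hsurj := hext.orbitMap_surjective hπe hc heh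
  obtain ⟨ψ, hψ⟩ := exists_comp_eq_of_ker_le hsurj (χ := orbitMap e')
    (hext.ker_orbitMap hIS hπe heh' hc heh ▸
      (hext'.ker_orbitMap hIS hπe' heh'' hc' he'h).ge)
  replace hψ (a : GWA k f) : ψ (orbitMap e a) = orbitMap e' a := LinearMap.congr_fun hψ a
  refine ⟨ψ, fun w => ?_, fun x => ?_, ?_⟩
  · obtain ⟨b, rfl⟩ := Submodule.Quotient.mk_surjective IT w
    have hb : ι (Submodule.Quotient.mk b) = orbitMap e (h * (c⁻¹ • b)) := by
      rw [orbitMap_mul_eq_map_mk heh, smul_inv_smul₀ hc]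
    rw [hb, hψ, orbitMap_mul_eq_map_mk he'h, smul_smul, Algebra.smul_def, Algebra.commutes]
    rfl
  · obtain ⟨a, rfl⟩ := hsurj x
    rw [hψ, map_orbitMap, map_orbitMap, hπe, hπe']
  · rintro n _ ⟨x, hx, rfl⟩
    obtain ⟨a, rfl⟩ := hsurj x
    obtain ⟨a', ha', hae⟩ : ∃ a' ∈ gwaComp k f (n - s), orbitMap e a' = orbitMap e a :=
      hext.isGrading.exists_map_eq (gM := fun n => gwaComp k f (n - s)) (m := a)
        (fun _ => Submodule.zero_mem _) (exists_sum_gwaComp s) (orbitMap e).toAddMonoidHom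
        (fun n _ ha => hext.isGrading.orbitMap_mem he ha (add_sub_cancel s n)) hx
    rw [← hae, hψ]
    exact hext'.isGrading.orbitMap_mem he' ha' (add_sub_cancel s n)

end Generators

section Existence

variable {k f} {IT IS : Submodule (GWA k f)ᵐᵒᵖ (GWA k f)} {t s : ℤ} {h h' : GWA k f}

theorem sq_gwaZ_sub_mem_extIdeal {ε : ℤ} (hh : h ∈ gwaComp k f (t - s)) (hh' : h' ∈ gwaComp k f ε)
    (hzS : gwaZ k f - s ∈ Submodule.span (GWA k f)ᵐᵒᵖ {h, h'}) (hzT : gwaZ k f - t ∈ IT) :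
    (gwaZ k f - s) ^ 2 ∈ extIdeal h h' IT := by
  obtain ⟨b, b', hb⟩ := mem_span_pair_iff_exists_mul.1 hzS
  have hzh' : SemiconjBy h' (gwaZ k f - ((s + ε : ℤ) : GWA k f)) (gwaZ k f - s) :=
    semiconjBy_gwaZ_sub (by rwa [add_sub_cancel_left])
  rw [pow_two]
  nth_rewrite 2 [← hb]
  rw [mul_add, ← mul_assoc, ← mul_assoc, ← (semiconjBy_gwaZ_sub hh).eq, ← hzh'.eq, mul_assoc,
    mul_assoc]
  exact add_mem (mul_mem_extIdeal (mul_mem_rightIdeal hzT b)) (mul_mem_rightIdeal mem_extIdeal _)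

/-- A section sends the generator of `A/I_S` to some `p(z)` with `p(s) ≠ 0`, and
`p(z)h ≡ p(s)h` modulo `hI_T`, so that `h` would be trivial in `A/J`. -/
theorem not_gradedSplits_of_notMem {J : Submodule (GWA k f)ᵐᵒᵖ (GWA k f)} (hJ : J ≤ IS)
    (hIS : IS ≠ ⊤) (hzS : gwaZ k f - s ∈ IS) (hzT : gwaZ k f - t ∈ IT)
    (hh : h ∈ gwaComp k f (t - s)) (hhS : h ∈ IS) (hTJ : ∀ b ∈ IT, h * b ∈ J) (hhJ : h ∉ J) :
    ¬ GradedSplits k f IS s (ModuleCat.of _ (GWA k f ⧸ J)) (qgrade k f J s)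
      (Submodule.factor hJ) := by
  rintro ⟨sec, hsec, hgr⟩
  obtain ⟨_, hp, hps⟩ := hgr s ⟨Submodule.Quotient.mk 1, ⟨1, by simpa using one_mem_gwaComp, rfl⟩,
    rfl⟩
  rw [sub_self] at hp
  obtain ⟨p, rfl⟩ := mem_gwaComp_zero.1 hp
  have hp1 : aeval (gwaZ k f) p - 1 ∈ IS := by
    have := LinearMap.congr_fun hsec (Submodule.Quotient.mk 1)
    rw [LinearMap.comp_apply, ← hps] at this
    exact (Submodule.Quotient.eq IS).1 this
  have hps0 : p.eval (s : k) ≠ 0 := fun h0 => hIS <| eq_top_iff.2 fun a _ => by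
    simpa using mul_mem_rightIdeal (sub_mem (aeval_gwaZ_mem hzS h0) hp1) a
  have hph : aeval (gwaZ k f) p * h ∈ J := by
    have hsech : orbitMap (sec (Submodule.Quotient.mk 1)) h = 0 := by
      rw [← map_orbitMap, orbitMap_mk_one, (Submodule.Quotient.mk_eq_zero IS).2 hhS, map_zero]
    rw [← hps] at hsech
    exact (Submodule.Quotient.mk_eq_zero J).1 hsech
  have hcomp : (p.comp (X - ((t - s : ℤ) : k[X]))).eval (t : k) = p.eval (s : k) := by simp
  have hdiff := hTJ _ (aeval_gwaZ_sub_eval_mem hzT (p.comp (X - ((t - s : ℤ) : k[X]))))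
  rw [mul_sub, ← aeval_gwaZ_mul hh, hcomp] at hdiff
  have := mul_mem_rightIdeal ((J.sub_mem_iff_right hph).1 hdiff)
    (algebraMap k _ (p.eval (s : k))⁻¹)
  exact hhJ (by simpa [mul_assoc, ← map_mul, hps0] using this)

theorem exists_isGradedExt_not_gradedSplits [CharZero k] {ε : ℤ}
    (hIS : IS = Submodule.span _ {h, h'}) (hIS_ne : IS ≠ ⊤) (hh : h ∈ gwaComp k f (t - s))
    (hh' : h' ∈ gwaComp k f ε) (hzS : gwaZ k f - s ∈ IS) (hzT : gwaZ k f - t ∈ IT)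
    (hIT : IsCoatom IT) (hhJ : h ∉ extIdeal h h' IT) :
    ∃ (E : ModuleCat.{0} (GWA k f)ᵐᵒᵖ) (gE : ℤ → Set E)
      (ι : (GWA k f ⧸ IT) →ₗ[(GWA k f)ᵐᵒᵖ] E)
      (π : E →ₗ[(GWA k f)ᵐᵒᵖ] (GWA k f ⧸ IS)),
      IsGradedExt k f IT t IS s 0 E gE ι π ∧ ¬GradedSplits k f IS s E gE π := by
  let J := extIdeal h h' IT
  have hhS : h ∈ IS := hIS ▸ Submodule.subset_span (by simp)
  have hJS : J ≤ IS := extIdeal_le_iff.2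
    ⟨hIS ▸ Submodule.subset_span (by simp), fun b _ => mul_mem_rightIdeal hhS b⟩
  have hTJ : IT ≤ J.comap (orbitMap h) := fun b => mul_mem_extIdeal
  have hker : J.comap (orbitMap h) = IT := (hIT.le_iff_eq fun htop => hhJ <| by
    have h1 : h * 1 ∈ J := htop.ge (Submodule.mem_top (x := 1))
    rwa [mul_one] at h1).1 hTJ
  have hsup : IS = LinearMap.range (orbitMap h) ⊔ J := by
    refine le_antisymm ?_ (sup_le (LinearMap.range_le_iff_comap.2 ?_) hJS)
    · rw [hIS, Submodule.span_le]
      exact Set.pair_subset (Submodule.mem_sup_left ⟨1, mul_one h⟩)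
        (Submodule.mem_sup_right mem_extIdeal)
    · exact eq_top_iff.2 fun b _ => mul_mem_rightIdeal hhS b
  have hmem {n : ℤ} {a : GWA k f} (ha : a ∈ gwaComp k f (n - t)) :
      h * a ∈ gwaComp k f (n - s) := by
    simpa using mul_mem_gwaComp hh ha
  refine ⟨ModuleCat.of _ (GWA k f ⧸ J), qgrade k f J s, IT.mapQ J (orbitMap h) hTJ,
    Submodule.factor hJS,
    ⟨isGrading_qgrade (sq_gwaZ_sub_mem_extIdeal hh hh' (hIS ▸ hzS) hzT), ?_,
      Submodule.factor_surjective hJS, ?_, ?_, ?_⟩,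
    not_gradedSplits_of_notMem hJS hIS_ne hzS hzT hh hhS hTJ hhJ⟩
  · rw [← LinearMap.ker_eq_bot, Submodule.ker_mapQ, hker, Submodule.mkQ_map_self]
  · rw [Submodule.range_mapQ, Submodule.factor, Submodule.ker_mapQ, Submodule.comap_id, hsup,
      Submodule.map_sup, Submodule.mkQ_map_self, sup_bot_eq]
  · rintro n _ ⟨_, ⟨a, ha, rfl⟩, rfl⟩
    exact ⟨h * a, hmem (by simpa using ha), rfl⟩
  · rintro n _ ⟨_, ⟨a, ha, rfl⟩, rfl⟩
    exact ⟨a, ha, rfl⟩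

/-- For degree reasons `h'` kills every lift of the generator of `A/I_S` and `h` sends it to a
scalar multiple of the generator of `A/I_T`; this scalar classifies the extension. -/
theorem extOneDim_of_span_pair [CharZero k] {ε : ℤ} (hIS : IS = Submodule.span _ {h, h'})
    (hIS_ne : IS ≠ ⊤) (hh : h ∈ gwaComp k f (t - s)) (hh' : h' ∈ gwaComp k f ε)
    (hzS : gwaZ k f - s ∈ IS) (hzT : gwaZ k f - t ∈ IT) (hIT : IsCoatom IT)
    (hT : ∀ a ∈ gwaComp k f (s + ε - t), a ∈ IT) (hhJ : h ∉ extIdeal h h' IT) :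
    ExtOneDim k f IT t IS s := by
  refine ⟨fun d hd E gE ι π hext => hext.splits_of_ne_zero hIS ?_ hzS hzT hd,
    exists_isGradedExt_not_gradedSplits hIS hIS_ne hh hh' hzS hzT hIT hhJ, ?_⟩
  · rintro _ (rfl | rfl)
    exacts [⟨_, hh⟩, ⟨_, hh'⟩]
  · intro E gE ι π hext hns E' gE' ι' π' hext' hns'
    obtain ⟨e, he, hπe, heh', c, hc, heh⟩ := hext.exists_generator hns hIS hh hh' hzS hzT hT
    obtain ⟨e', he', hπe', he'h', c', hc', he'h⟩ :=
      hext'.exists_generator hns' hIS hh hh' hzS hzT hT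
    exact ⟨c' * c⁻¹, mul_ne_zero hc' (inv_ne_zero hc), hext.exists_hom_of_generators hext' hIS
      he hπe heh' hc heh he' hπe' he'h' hc' he'h⟩

end Existence

section Representation

variable {k f}

/-- The left representation of `A(f)` on `k[X]` attached to a factorization `f = a · σ(b)`:
`z` acts by multiplication by `X`, `x` by `p ↦ a · p(X + 1)`, and `y` by `p ↦ b · p(X - 1)`. -/
def gwaRep (a b : k[X]) (hab : a * b.comp (X + 1) = f) : GWA k f →ₐ[k] Module.End k k[X] :=
  RingQuot.liftAlgHom k ⟨FreeAlgebra.lift k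
    ![Algebra.lmul k k[X] a * (aeval (X + 1 : k[X])).toLinearMap,
      Algebra.lmul k k[X] b * (aeval (X - 1 : k[X])).toLinearMap,
      Algebra.lmul k k[X] X], by
    have hz (q : k[X]) : aeval (Algebra.lmul k k[X] X) q = Algebra.lmul k k[X] q := by
      rw [aeval_algHom_apply, aeval_X_left_apply]
    rintro _ _ (_ | _ | _ | _)
    · refine LinearMap.ext fun p => ?_
      simp only [map_mul, map_add, map_one, FreeAlgebra.lift_ι_apply]
      change a * (X * p).comp (X + 1) = X * (a * p.comp (X + 1)) + a * p.comp (X + 1)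
      rw [mul_comp, X_comp]
      ring
    · refine LinearMap.ext fun p => ?_
      simp only [map_mul, map_sub, map_one, FreeAlgebra.lift_ι_apply]
      change b * (X * p).comp (X - 1) = X * (b * p.comp (X - 1)) - b * p.comp (X - 1)
      rw [mul_comp, X_comp]
      ring
    · rw [← aeval_algHom_apply, map_mul]
      simp only [FreeAlgebra.lift_ι_apply]
      refine Eq.trans (LinearMap.ext fun p => ?_) (hz _).symm
      change a * (b * p.comp (X - 1)).comp (X + 1) = f * p
      rw [mul_comp, comp_assoc, sub_comp, X_comp, one_comp, add_sub_cancel_right, comp_X,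
        ← mul_assoc, hab]
    · rw [← aeval_algHom_apply, map_mul]
      simp only [FreeAlgebra.lift_ι_apply]
      refine Eq.trans (LinearMap.ext fun p => ?_) (hz _).symm
      change b * (a * p.comp (X + 1)).comp (X - 1) = f.comp (X - 1) * p
      rw [← hab, mul_comp, mul_comp, comp_assoc, comp_assoc, add_comp, X_comp, one_comp,
        sub_add_cancel, comp_X, comp_X]
      ring⟩

variable {a b : k[X]} (hab : a * b.comp (X + 1) = f)

theorem gwaRep_gwaX (p : k[X]) : gwaRep a b hab (gwaX k f) p = a * p.comp (X + 1) := by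
  simp [gwaRep, gwaX, aeval_def, comp, Polynomial.algebraMap_eq]

theorem gwaRep_gwaY (p : k[X]) : gwaRep a b hab (gwaY k f) p = b * p.comp (X - 1) := by
  simp [gwaRep, gwaY, aeval_def, comp, Polynomial.algebraMap_eq]

theorem gwaRep_aeval_gwaZ (q p : k[X]) : gwaRep a b hab (aeval (gwaZ k f) q) p = q * p := by
  have hz : gwaRep a b hab (gwaZ k f) = Algebra.lmul k k[X] X := by simp [gwaRep, gwaZ]
  rw [← aeval_algHom_apply, hz, aeval_algHom_apply, aeval_X_left_apply]
  rfl

/-- The right ideal of the elements of `A(f)` that map `k[X]` into `D · k[X]` under the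
representation `gwaRep a b hab`; it bounds a right ideal given by generators from above. -/
def dvdIdeal (D : k[X]) : Submodule (GWA k f)ᵐᵒᵖ (GWA k f) where
  carrier := {w | ∀ p, D ∣ gwaRep a b hab w p}
  zero_mem' p := by simp
  add_mem' hu hv p := by
    rw [map_add, LinearMap.add_apply]
    exact dvd_add (hu p) (hv p)
  smul_mem' r w hw p := by
    change D ∣ gwaRep a b hab (w * r.unop) p
    rw [map_mul, Module.End.mul_apply]
    exact hw _

variable {hab} {D : k[X]}

theorem gwaX_mem_dvdIdeal_iff : gwaX k f ∈ dvdIdeal hab D ↔ D ∣ a := by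
  refine ⟨fun h => ?_, fun hD p => ?_⟩
  · simpa [gwaRep_gwaX] using h 1
  · rw [gwaRep_gwaX]
    exact hD.mul_right _

theorem gwaY_mem_dvdIdeal_iff : gwaY k f ∈ dvdIdeal hab D ↔ D ∣ b := by
  refine ⟨fun h => ?_, fun hD p => ?_⟩
  · simpa [gwaRep_gwaY] using h 1
  · rw [gwaRep_gwaY]
    exact hD.mul_right _

theorem aeval_gwaZ_mem_dvdIdeal_iff {q : k[X]} :
    aeval (gwaZ k f) q ∈ dvdIdeal hab D ↔ D ∣ q := by
  refine ⟨fun h => ?_, fun hD p => ?_⟩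
  · simpa [gwaRep_aeval_gwaZ] using h 1
  · rw [gwaRep_aeval_gwaZ]
    exact hD.mul_right _

theorem one_mem_dvdIdeal_iff : 1 ∈ dvdIdeal hab D ↔ D ∣ 1 := by
  simpa using aeval_gwaZ_mem_dvdIdeal_iff (hab := hab) (D := D) (q := 1)

theorem gwaZ_mem_dvdIdeal_iff : gwaZ k f ∈ dvdIdeal hab D ↔ D ∣ X := by
  simpa using aeval_gwaZ_mem_dvdIdeal_iff (hab := hab) (D := D) (q := X)

theorem gwaZ_sub_one_mem_dvdIdeal_iff : gwaZ k f - 1 ∈ dvdIdeal hab D ↔ D ∣ X - 1 := by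
  have hz : aeval (gwaZ k f) (X - 1 : k[X]) = gwaZ k f - 1 := by rw [map_sub, aeval_X, map_one]
  rw [← hz, aeval_gwaZ_mem_dvdIdeal_iff]

variable (f) in
theorem mul_one_comp_X_add_one : f * (1 : k[X]).comp (X + 1) = f := by
  rw [one_comp, mul_one]

variable (f) in
theorem one_mul_comp_X_sub_one_comp_X_add_one : 1 * (f.comp (X - 1)).comp (X + 1) = f := by
  rw [one_mul, comp_assoc, sub_comp, X_comp, one_comp, add_sub_cancel_right, comp_X]

theorem X_sub_one_pow_dvd_comp {m : ℕ} (hf : X ^ m ∣ f) : (X - 1) ^ m ∣ f.comp (X - 1) := by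
  obtain ⟨q, rfl⟩ := hf
  exact ⟨q.comp (X - 1), by rw [mul_comp, pow_comp, X_comp]⟩

theorem X_sub_one_dvd_comp (hf : X ∣ f) : X - 1 ∣ f.comp (X - 1) := by
  simpa only [pow_one] using X_sub_one_pow_dvd_comp (m := 1) ((pow_one X).dvd.trans hf)

theorem not_pow_two_dvd_self {p : k[X]} (hp0 : p ≠ 0) (hp : ¬ IsUnit p) : ¬ p ^ 2 ∣ p := fun h =>
  absurd ((pow_dvd_pow_iff hp0 hp).1 (h.trans (pow_one p).symm.dvd)) (by decide)

theorem not_isUnit_X_sub_one : ¬ IsUnit (X - 1 : k[X]) := by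
  simpa using not_isUnit_X_sub_C (1 : k)

end Representation

section SimpleModules

/-- The right ideal `(x, z)A`, so that `X = A/(x, z)A`. -/
def gwaIdealX : Submodule (GWA k f)ᵐᵒᵖ (GWA k f) :=
  Submodule.span _ {gwaX k f, gwaZ k f}

/-- The right ideal `(y, z - 1)A`, so that `Y = (A/(y, z - 1)A)⟨1⟩`. -/
def gwaIdealY : Submodule (GWA k f)ᵐᵒᵖ (GWA k f) :=
  Submodule.span _ {gwaY k f, gwaZ k f - 1}

variable {k f} {I : Submodule (GWA k f)ᵐᵒᵖ (GWA k f)}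

theorem gwaX_mem_gwaIdealX : gwaX k f ∈ gwaIdealX k f :=
  Submodule.subset_span (by simp)

theorem gwaZ_sub_zero_mem_gwaIdealX : gwaZ k f - (0 : ℤ) ∈ gwaIdealX k f :=
  Submodule.subset_span (by simp)

theorem gwaY_mem_gwaIdealY : gwaY k f ∈ gwaIdealY k f :=
  Submodule.subset_span (by simp)

theorem gwaZ_sub_one_mem_gwaIdealY : gwaZ k f - (1 : ℤ) ∈ gwaIdealY k f :=
  Submodule.subset_span (by simp)

theorem mem_of_gwaX_mem (hx : gwaX k f ∈ I) {n : ℤ} (hn : 0 < n) {a : GWA k f}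
    (ha : a ∈ gwaComp k f n) : a ∈ I := by
  obtain ⟨p, rfl⟩ := mem_gwaComp.1 ha
  obtain ⟨j, rfl⟩ := Int.eq_succ_of_zero_lt hn
  rw [← Nat.cast_succ, gwaMon_natCast, pow_succ', ← mul_assoc,
    aeval_gwaZ_mul gwaX_mem_gwaComp, mul_assoc]
  exact mul_mem_rightIdeal hx _

theorem mem_of_gwaY_mem (hy : gwaY k f ∈ I) {n : ℤ} (hn : n < 0) {a : GWA k f}
    (ha : a ∈ gwaComp k f n) : a ∈ I := by
  obtain ⟨p, rfl⟩ := mem_gwaComp.1 ha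
  obtain ⟨j, rfl⟩ := Int.eq_negSucc_of_lt_zero hn
  rw [Int.negSucc_eq, ← Nat.cast_succ, gwaMon_neg_natCast, pow_succ', ← mul_assoc,
    aeval_gwaZ_mul gwaY_mem_gwaComp, mul_assoc]
  exact mul_mem_rightIdeal hy _

theorem gwaX_pow_mul_gwaY_pow (j : ℕ) :
    gwaX k f ^ j * gwaY k f ^ j =
      aeval (gwaZ k f) (∏ i ∈ Finset.range j, f.comp (X + (i : k[X]))) := by
  induction j with
  | zero => simp
  | succ j ih =>
    have hj : gwaX k f ^ j ∈ gwaComp k f j := by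
      simpa [gwaMon_natCast] using gwaMon_mem_gwaComp (f := f) (j : ℤ)
    rw [pow_succ, pow_succ', mul_assoc, ← mul_assoc (gwaX k f), gwaX_mul_gwaY, ← mul_assoc,
      mul_aeval_gwaZ hj, mul_assoc, ih, ← map_mul, Finset.prod_range_succ_comm, Int.cast_natCast]

theorem gwaY_pow_mul_gwaX_pow (j : ℕ) :
    gwaY k f ^ j * gwaX k f ^ j =
      aeval (gwaZ k f) (∏ i ∈ Finset.range j, f.comp (X - ((i + 1 : ℕ) : k[X]))) := by
  induction j with
  | zero => simp
  | succ j ih =>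
    have hj : gwaY k f ^ j ∈ gwaComp k f (-j) := by
      simpa [gwaMon_neg_natCast] using gwaMon_mem_gwaComp (f := f) (-j : ℤ)
    have hcomp : (f.comp (X - 1)).comp (X + ((-j : ℤ) : k[X])) =
        f.comp (X - ((j + 1 : ℕ) : k[X])) := by
      rw [comp_assoc]
      congr 1
      simp only [Int.cast_neg, Int.cast_natCast, sub_comp, X_comp, one_comp, Nat.cast_succ]
      ring
    rw [pow_succ, pow_succ', mul_assoc, ← mul_assoc (gwaY k f), gwaY_mul_gwaX, ← mul_assoc,
      mul_aeval_gwaZ hj, hcomp, mul_assoc, ih, ← map_mul, Finset.prod_range_succ_comm]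

theorem exists_mul_sub_one_mem_of_gwaMon_mul_eq {t n : ℤ} (hzI : gwaZ k f - t ∈ I)
    {b : GWA k f} {r : k[X]} (hb : gwaMon k f n * b = aeval (gwaZ k f) r)
    (hr : r.eval (t : k) ≠ 0) {a : GWA k f} (ha : a ∈ gwaComp k f n) (haI : a ∉ I) :
    ∃ b, a * b - 1 ∈ I := by
  obtain ⟨p, rfl⟩ := mem_gwaComp.1 ha
  have hp : p.eval (t : k) ≠ 0 := fun hp =>
    haI (mul_mem_rightIdeal (aeval_gwaZ_mem hzI hp) _)
  set c := (p * r).eval (t : k) with hc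
  have hc0 : c ≠ 0 := by simp [hc, hp, hr]
  refine ⟨b * algebraMap k _ c⁻¹, ?_⟩
  have hmem := mul_mem_rightIdeal (aeval_gwaZ_sub_eval_mem hzI (p * r)) (algebraMap k _ c⁻¹)
  rwa [sub_mul, ← hc, ← map_mul (algebraMap k _), mul_inv_cancel₀ hc0, map_one, map_mul, ← hb,
    mul_assoc, mul_assoc, ← mul_assoc] at hmem

theorem gwaIdealX_ne_top (hf : X ∣ f) : gwaIdealX k f ≠ ⊤ := by
  have hle : gwaIdealX k f ≤ dvdIdeal (mul_one_comp_X_add_one f) X :=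
    Submodule.span_le.2 <| Set.pair_subset (gwaX_mem_dvdIdeal_iff.2 hf) <|
      gwaZ_mem_dvdIdeal_iff.2 dvd_rfl
  exact fun htop => not_isUnit_X <| isUnit_of_dvd_one <|
    one_mem_dvdIdeal_iff.1 (hle (htop ▸ Submodule.mem_top))

theorem gwaIdealY_ne_top (hf : X ∣ f) : gwaIdealY k f ≠ ⊤ := by
  have hle : gwaIdealY k f ≤ dvdIdeal (one_mul_comp_X_sub_one_comp_X_add_one f) (X - 1) :=
    Submodule.span_le.2 <| Set.pair_subset
      (gwaY_mem_dvdIdeal_iff.2 (X_sub_one_dvd_comp hf))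
      (gwaZ_sub_one_mem_dvdIdeal_iff.2 dvd_rfl)
  exact fun htop => not_isUnit_X_sub_one <| isUnit_of_dvd_one <|
    one_mem_dvdIdeal_iff.1 (hle (htop ▸ Submodule.mem_top))

variable [CharZero k]

theorem isCoatom_gwaIdealX (hf : X ∣ f) (hneg : ∀ n : ℤ, n < 0 → f.eval (n : k) ≠ 0) :
    IsCoatom (gwaIdealX k f) := by
  refine isCoatom_of_exists_mul_sub_one_mem gwaZ_sub_zero_mem_gwaIdealX (gwaIdealX_ne_top hf)
    fun n a ha haI => ?_
  obtain ⟨j, rfl⟩ : ∃ j : ℕ, n = -j := Int.exists_eq_neg_ofNat <| not_lt.1 fun hn =>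
    haI (mem_of_gwaX_mem gwaX_mem_gwaIdealX hn ha)
  refine exists_mul_sub_one_mem_of_gwaMon_mul_eq gwaZ_sub_zero_mem_gwaIdealX
    (by rw [gwaMon_neg_natCast, gwaY_pow_mul_gwaX_pow]) ?_ ha haI
  rw [eval_prod, Finset.prod_ne_zero_iff]
  intro i _
  simpa [eval_comp] using hneg (-(i + 1 : ℕ)) (by omega)

theorem isCoatom_gwaIdealY (hf : X ∣ f) (hpos : ∀ n : ℤ, 0 < n → f.eval (n : k) ≠ 0) :
    IsCoatom (gwaIdealY k f) := by
  refine isCoatom_of_exists_mul_sub_one_mem gwaZ_sub_one_mem_gwaIdealY (gwaIdealY_ne_top hf)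
    fun n a ha haI => ?_
  obtain ⟨j, rfl⟩ : ∃ j : ℕ, n = j := Int.eq_ofNat_of_zero_le <| not_lt.1 fun hn =>
    haI (mem_of_gwaY_mem gwaY_mem_gwaIdealY hn ha)
  refine exists_mul_sub_one_mem_of_gwaMon_mul_eq gwaZ_sub_one_mem_gwaIdealY
    (by rw [gwaMon_natCast, gwaX_pow_mul_gwaY_pow]) ?_ ha haI
  rw [eval_prod, Finset.prod_ne_zero_iff]
  intro i _
  simpa [eval_comp] using hpos (1 + i) (by omega)

end SimpleModules

section Ext

variable {k f} [CharZero k]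

theorem extOneDim_gwaIdealY_gwaIdealX (hf : X ∣ f) (hpos : ∀ n : ℤ, 0 < n → f.eval (n : k) ≠ 0) :
    ExtOneDim k f (gwaIdealY k f) 1 (gwaIdealX k f) 0 := by
  refine extOneDim_of_span_pair (h := gwaX k f) (h' := gwaZ k f) (ε := 0) rfl (gwaIdealX_ne_top hf)
    gwaX_mem_gwaComp gwaZ_mem_gwaComp gwaZ_sub_zero_mem_gwaIdealX gwaZ_sub_one_mem_gwaIdealY
    (isCoatom_gwaIdealY hf hpos) (fun _ => mem_of_gwaY_mem gwaY_mem_gwaIdealY (by decide))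
    fun hmem => ?_
  have hle : extIdeal (gwaX k f) (gwaZ k f) (gwaIdealY k f) ≤
      dvdIdeal (one_mul_comp_X_sub_one_comp_X_add_one f) X := by
    have hz : gwaZ k f ∈ dvdIdeal (one_mul_comp_X_sub_one_comp_X_add_one f) X :=
      gwaZ_mem_dvdIdeal_iff.2 dvd_rfl
    refine extIdeal_span_pair_le hz ?_ ?_
    · rw [gwaX_mul_gwaY]
      exact aeval_gwaZ_mem_dvdIdeal_iff.2 hf
    · rw [mul_sub, gwaX_mul_gwaZ, add_mul, one_mul, mul_one, add_sub_cancel_right]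
      exact mul_mem_rightIdeal hz _
  exact not_isUnit_X (isUnit_of_dvd_one (gwaX_mem_dvdIdeal_iff.1 (hle hmem)))

theorem extOneDim_gwaIdealX_gwaIdealY (hf : X ∣ f) (hneg : ∀ n : ℤ, n < 0 → f.eval (n : k) ≠ 0) :
    ExtOneDim k f (gwaIdealX k f) 0 (gwaIdealY k f) 1 := by
  refine extOneDim_of_span_pair (h := gwaY k f) (h' := gwaZ k f - 1) (ε := 0) rfl
    (gwaIdealY_ne_top hf) gwaY_mem_gwaComp (sub_mem gwaZ_mem_gwaComp one_mem_gwaComp)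
    gwaZ_sub_one_mem_gwaIdealY gwaZ_sub_zero_mem_gwaIdealX
    (isCoatom_gwaIdealX hf hneg) (fun _ => mem_of_gwaX_mem gwaX_mem_gwaIdealX (by decide))
    fun hmem => ?_
  have hle : extIdeal (gwaY k f) (gwaZ k f - 1) (gwaIdealX k f) ≤
      dvdIdeal (mul_one_comp_X_add_one f) (X - 1) := by
    have hz : gwaZ k f - 1 ∈ dvdIdeal (mul_one_comp_X_add_one f) (X - 1) :=
      gwaZ_sub_one_mem_dvdIdeal_iff.2 dvd_rfl
    refine extIdeal_span_pair_le hz ?_ ?_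
    · rw [gwaY_mul_gwaX]
      exact aeval_gwaZ_mem_dvdIdeal_iff.2 (X_sub_one_dvd_comp hf)
    · rw [gwaY_mul_gwaZ]
      exact mul_mem_rightIdeal hz _
  exact not_isUnit_X_sub_one (isUnit_of_dvd_one (gwaY_mem_dvdIdeal_iff.1 (hle hmem)))

theorem extOneDim_gwaIdealX_self (hf : X ^ 2 ∣ f) (hneg : ∀ n : ℤ, n < 0 → f.eval (n : k) ≠ 0) :
    ExtOneDim k f (gwaIdealX k f) 0 (gwaIdealX k f) 0 := by
  have hXf : X ∣ f := (dvd_pow_self X two_ne_zero).trans hf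
  refine extOneDim_of_span_pair (h := gwaZ k f) (h' := gwaX k f) (ε := 1)
    (by rw [gwaIdealX, Set.pair_comm]) (gwaIdealX_ne_top hXf) gwaZ_mem_gwaComp gwaX_mem_gwaComp
    gwaZ_sub_zero_mem_gwaIdealX gwaZ_sub_zero_mem_gwaIdealX (isCoatom_gwaIdealX hXf hneg)
    (fun _ => mem_of_gwaX_mem gwaX_mem_gwaIdealX (by decide)) fun hmem => ?_
  have hle : extIdeal (gwaZ k f) (gwaX k f) (gwaIdealX k f) ≤
      dvdIdeal (mul_one_comp_X_add_one f) (X ^ 2) := by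
    have hx : gwaX k f ∈ dvdIdeal (mul_one_comp_X_add_one f) (X ^ 2) :=
      gwaX_mem_dvdIdeal_iff.2 hf
    refine extIdeal_span_pair_le hx ?_ ?_
    · rw [eq_sub_of_add_eq (gwaX_mul_gwaZ.trans (add_one_mul _ _)).symm, ← mul_sub_one]
      exact mul_mem_rightIdeal hx _
    · have hz : gwaZ k f * gwaZ k f = aeval (gwaZ k f) (X ^ 2 : k[X]) := by
        rw [map_pow, aeval_X, pow_two]
      rw [hz]
      exact aeval_gwaZ_mem_dvdIdeal_iff.2 dvd_rfl
  exact not_pow_two_dvd_self X_ne_zero not_isUnit_X (gwaZ_mem_dvdIdeal_iff.1 (hle hmem))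

theorem extOneDim_gwaIdealY_self (hf : X ^ 2 ∣ f) (hpos : ∀ n : ℤ, 0 < n → f.eval (n : k) ≠ 0) :
    ExtOneDim k f (gwaIdealY k f) 1 (gwaIdealY k f) 1 := by
  have hXf : X ∣ f := (dvd_pow_self X two_ne_zero).trans hf
  refine extOneDim_of_span_pair (h := gwaZ k f - 1) (h' := gwaY k f) (ε := -1)
    (by rw [gwaIdealY, Set.pair_comm]) (gwaIdealY_ne_top hXf)
    (sub_mem gwaZ_mem_gwaComp one_mem_gwaComp) gwaY_mem_gwaComp
    gwaZ_sub_one_mem_gwaIdealY gwaZ_sub_one_mem_gwaIdealY (isCoatom_gwaIdealY hXf hpos)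
    (fun _ => mem_of_gwaY_mem gwaY_mem_gwaIdealY (by decide)) fun hmem => ?_
  have hle : extIdeal (gwaZ k f - 1) (gwaY k f) (gwaIdealY k f) ≤
      dvdIdeal (one_mul_comp_X_sub_one_comp_X_add_one f) ((X - 1) ^ 2) := by
    have hy : gwaY k f ∈
        dvdIdeal (one_mul_comp_X_sub_one_comp_X_add_one f) ((X - 1) ^ 2) :=
      gwaY_mem_dvdIdeal_iff.2 (X_sub_one_pow_dvd_comp hf)
    refine extIdeal_span_pair_le hy ?_ ?_
    · rw [← gwaY_mul_gwaZ]
      exact mul_mem_rightIdeal hy _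
    · have hz : (gwaZ k f - 1) * (gwaZ k f - 1) = aeval (gwaZ k f) ((X - 1) ^ 2 : k[X]) := by
        rw [map_pow, map_sub, aeval_X, map_one, pow_two]
      rw [hz]
      exact aeval_gwaZ_mem_dvdIdeal_iff.2 dvd_rfl
  exact not_pow_two_dvd_self (X_sub_C_ne_zero 1) not_isUnit_X_sub_one
    (gwaZ_sub_one_mem_dvdIdeal_iff.1 (hle hmem))

end Ext

theorem ext_one_dimensional_multiple_root_general (k : Type) [Field k] [CharZero k] {f : k[X]}
    (hf : X ^ 2 ∣ f) (hroot : ∀ n : ℤ, n ≠ 0 → f.eval (n : k) ≠ 0) :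
    ExtOneDim k f (gwaIdealY k f) 1 (gwaIdealX k f) 0 ∧
    ExtOneDim k f (gwaIdealX k f) 0 (gwaIdealY k f) 1 ∧
    ExtOneDim k f (gwaIdealX k f) 0 (gwaIdealX k f) 0 ∧
    ExtOneDim k f (gwaIdealY k f) 1 (gwaIdealY k f) 1 := by
  have hXf : X ∣ f := (dvd_pow_self X two_ne_zero).trans hf
  have hpos (n : ℤ) (hn : 0 < n) : f.eval (n : k) ≠ 0 := hroot n hn.ne'
  have hneg (n : ℤ) (hn : n < 0) : f.eval (n : k) ≠ 0 := hroot n hn.ne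
  exact ⟨extOneDim_gwaIdealY_gwaIdealX hXf hpos, extOneDim_gwaIdealX_gwaIdealY hXf hneg,
    extOneDim_gwaIdealX_self hf hneg, extOneDim_gwaIdealY_self hf hpos⟩

set_option maxHeartbeats 1000000 in
/-- Let `α = 0`, `f = z²`.  As graded vector spaces, `Ext¹_A(X, Y)`,
`Ext¹_A(Y, X)`, `Ext¹_A(X, X)` and `Ext¹_A(Y, Y)` are each one-dimensional over `k`,
concentrated in degree `0`, where `X = A/(x,z)A` and `Y = (A/(y,z−1)A)⟨1⟩` are the
integrally supported graded simple modules.  (`Ext¹_A(M,N) = ⊕_d Ext¹_{gr A}(M, N⟨d⟩)`,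
encoded via graded extensions as in `ExtOneDim`.) -/
theorem ext_one_dimensional_multiple_root
    (k : Type) [Field k] [IsAlgClosed k] [CharZero k] :
    letI IX : Submodule (GWA k (X ^ 2))ᵐᵒᵖ (GWA k (X ^ 2)) :=
      Submodule.span (GWA k (X ^ 2))ᵐᵒᵖ {gwaX k (X ^ 2), gwaZ k (X ^ 2)}
    letI IY : Submodule (GWA k (X ^ 2))ᵐᵒᵖ (GWA k (X ^ 2)) :=
      Submodule.span (GWA k (X ^ 2))ᵐᵒᵖ {gwaY k (X ^ 2), gwaZ k (X ^ 2) - 1}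
    ExtOneDim k (X ^ 2) IY 1 IX 0 ∧
    ExtOneDim k (X ^ 2) IX 0 IY 1 ∧
    ExtOneDim k (X ^ 2) IX 0 IX 0 ∧
    ExtOneDim k (X ^ 2) IY 1 IY 1 := by
  exact ext_one_dimensional_multiple_root_general k dvd_rfl fun n hn => by simpa using hn

end
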